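/- arXiv:2301.08056 — 2 statements merged into one kernel-verified Lean document; each statement's English description precedes it below -/
import Mathlib

section
/- Let τ be a probability measure on [0,2π) and define the geodesic random walk kernel K_τ(x,A) = (1/ω_{d-2}) ∫_{S_x^{d-2}} ∫_{[0,2π)} 1_A(γ_{(x,v)}(θ)) τ(dθ) μ_x(dv) for x ∈ S^{d-1} and Borel A ⊆ S^{d-1}. Then K_τ is reversible with respect to the volume measure σ_{d-1}: for all Borel sets A, B ⊆ S^{d-1}, ∫_B K_τ(x,A) σ_{d-1}(dx) = ∫_A K_τ(x,B) σ_{d-1}(dx). -/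
/-!
The joint measure of a pair (current position, next position), started from the volume measure
`σ_{d-1}`, gives `B ×ˢ A` the mass `ω_{d-2} ∫_B K_τ(x, A) σ_{d-1}(dx)`, so reversibility says that
this measure on `ℝ^d × ℝ^d` is symmetric. It is invariant under the diagonal action of the
orthogonal group, since Hausdorff measures are invariant under isometries and a linear isometry
`g` sends `S_x^{d-2}` to `S_{gx}^{d-2}` and `γ_{(x,v)}` to `γ_{(gx,gv)}`. Two unit vectors `x`, `y`
are exchanged by the reflection in the hyperplane orthogonal to `x - y`, so averaging a function of
`(x, y)` over the diagonal action, with respect to the Haar measure of the compact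
orthogonal group, gives a symmetric function. A function and its average have the same integral
up to the mass of the Haar measure, so the joint measure is symmetric (`symmetric_of_invariant`).

The averaging uses Tonelli's theorem, hence needs finite Hausdorff measures on the
spheres (`hausdorffMeasure_sphere_lt_top`) and measurability in `x` of integrals over `S_x^{d-2}`.
The latter is obtained by transporting these integrals to one fixed subsphere `S_e^{d-2}` along
the reflection exchanging `e` and `x`, which is a measurable function of `x`.
-/

open MeasureTheory Real ProbabilityTheory
open scoped RealInnerProductSpace ENNReal NNReal

noncomputable section

/-- Euclidean space `ℝ^d`. -/
abbrev E (d : ℕ) : Type := EuclideanSpace ℝ (Fin d)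

/-- The unit sphere `S^{d-1} ⊆ ℝ^d`. -/
def sph (d : ℕ) : Set (E d) := Metric.sphere 0 1

/-- The great subsphere `S_x^{d-2}` with pole `x`. -/
def subsph (d : ℕ) (x : E d) : Set (E d) := {v | v ∈ sph d ∧ ⟪v, x⟫ = 0}

/-- The great circle (geodesic) `γ_{(x,v)}(θ) = cos θ • x + sin θ • v`. -/
def geo {d : ℕ} (x v : E d) (θ : ℝ) : E d := Real.cos θ • x + Real.sin θ • v

/-- The canonical volume measure `σ_{d-1}` on the sphere: the `(d-1)`-dimensional
Hausdorff measure restricted to `S^{d-1}`. -/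
def sphMeasure (d : ℕ) : Measure (E d) := (μH[(d:ℝ) - 1]).restrict (sph d)

/-- `ω_{d-2}`, the total volume of a `(d-2)`-dimensional unit sphere. -/
def omegaSub (d : ℕ) : ℝ≥0∞ :=
  μH[(d:ℝ) - 2] (Metric.sphere (0 : EuclideanSpace ℝ (Fin (d - 1))) 1)

/-- The geodesic level set `L(x,v,t) = {θ ∈ [0,2π) : p(γ_{(x,v)}(θ)) > t}`. -/
def lvl {d : ℕ} (p : E d → ℝ) (x v : E d) (t : ℝ) : Set ℝ :=
  {θ | θ ∈ Set.Ico 0 (2 * π) ∧ t < p (geo x v θ)}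

/-- The map `T_θ(x,v) = (cos θ x + sin θ v, sin θ x − cos θ v)`. -/
def Tmap {d : ℕ} (θ : ℝ) (x v : E d) : E d × E d :=
  (Real.cos θ • x + Real.sin θ • v, Real.sin θ • x - Real.cos θ • v)
/-- The geodesic random walk kernel
`K_τ(x,A) = (1/ω_{d-2}) ∫_{S_x^{d-2}} ∫_{[0,2π)} 1_A(γ_{(x,v)}(θ)) τ(dθ) μ_x(dv)`. -/
def Ktau (d : ℕ) (τ : Measure ℝ) (x : E d) (A : Set (E d)) : ℝ≥0∞ :=
  (omegaSub d)⁻¹ *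
    ∫⁻ v in subsph d x,
      (∫⁻ θ in Set.Ico 0 (2 * π), A.indicator (fun _ => (1 : ℝ≥0∞)) (geo x v θ) ∂τ)
    ∂μH[(d:ℝ) - 2]

/-! ### Finiteness of the Hausdorff measure of spheres -/

/-- The `n`-dimensional Hausdorff measure of the unit sphere of an `(n+1)`-dimensional Euclidean
space is finite: the sphere is compact and, near each point, a Lipschitz image of a ball of
`ℝ^n` under an inverse stereographic projection. -/
lemma hausdorffMeasure_sphere_lt_top {F : Type*} [NormedAddCommGroup F] [InnerProductSpace ℝ F]
    [FiniteDimensional ℝ F] [MeasurableSpace F] [BorelSpace F] (n : ℕ)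
    (hn : Module.finrank ℝ F = n + 1) :
    μH[(n : ℝ)] (Metric.sphere (0 : F) 1) < ⊤ := by
  have : ProperSpace F := FiniteDimensional.proper ℝ F
  have hcoe : μH[(n : ℝ)] (Metric.sphere (0 : F) 1)
      = μH[(n : ℝ)] (Set.univ : Set (Metric.sphere (0 : F) 1)) := by
    have := (isometry_subtype_coe (s := Metric.sphere (0 : F) 1)).hausdorffMeasure_image
      (Or.inl (n.cast_nonneg : (0 : ℝ) ≤ n)) Set.univ
    rw [← this, Set.image_univ, Subtype.range_coe]
  rw [hcoe]
  refine isCompact_univ.measure_lt_top_of_nhdsWithin fun x _ => ?_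
  rw [nhdsWithin_univ]
  have hx : ‖(x : F)‖ = 1 := by simp
  have hv : ‖(-x : F)‖ = 1 := by rw [norm_neg, hx]
  let W := (ℝ ∙ (-x : F))ᗮ
  have hW : Module.finrank ℝ W = n := by
    have h1 := Submodule.finrank_add_finrank_orthogonal (ℝ ∙ (-x : F))
    rw [finrank_span_singleton (by rw [← norm_ne_zero_iff, hv]; norm_num), hn] at h1
    change Module.finrank ℝ (ℝ ∙ (-x : F))ᗮ = n
    omega
  have hsm : ContDiffAt ℝ 1 (fun w : W => stereoInvFunAux (-x : F) w) 0 :=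
    (contDiff_stereoInvFunAux.comp (Submodule.subtypeL W).contDiff).contDiffAt
  obtain ⟨K, t, ht, hK⟩ := hsm.exists_lipschitzOnWith
  let s : Set W := t ∩ Metric.ball 0 1
  have hs : s ∈ nhds (0 : W) := Filter.inter_mem ht (Metric.ball_mem_nhds 0 one_pos)
  have hKs : LipschitzOnWith K (stereoInvFun hv) s := by
    intro a ha b hb
    exact hK ha.1 hb.1
  have hfin : μH[(n : ℝ)] s < ⊤ := by
    refine (measure_mono Set.inter_subset_right).trans_lt ?_
    have : (μH[(n : ℝ)] : Measure W).IsAddHaarMeasure := by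
      rw [← hW]; infer_instance
    exact measure_ball_lt_top
  have himg : μH[(n : ℝ)] (stereoInvFun hv '' s) < ⊤ := by
    refine (hKs.hausdorffMeasure_image_le n.cast_nonneg).trans_lt ?_
    exact ENNReal.mul_lt_top (by simp) hfin
  refine ⟨stereoInvFun hv '' s, ?_, himg⟩
  have hxs : x ∈ (stereographic hv).source := by
    simp only [stereographic_source, Set.mem_compl_iff, Set.mem_singleton_iff]
    intro h
    have h2 : (x : F) = -x := congrArg Subtype.val h
    have h3 : (x : F) = 0 := by
      have : IsAddTorsionFree F := .of_isTorsionFree ℝ F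
      exact self_eq_neg.1 h2
    rw [h3] at hx
    simp at hx
  have hx0 : stereographic hv x = 0 := by
    have := stereographic_apply_neg (-x)
    rwa [neg_neg] at this
  have hpre : (stereographic hv) ⁻¹' s ∈ nhds x := by
    apply ((stereographic hv).continuousAt hxs).preimage_mem_nhds
    rwa [hx0]
  filter_upwards [hpre, (stereographic hv).open_source.mem_nhds hxs] with y hy hys
  exact ⟨stereographic hv y, hy, (stereographic hv).left_inv hys⟩

/-! ### Averaging over the orthogonal group -/

/-- The orthogonal group `O(d)`, as the group of unitary operators with the norm topology. -/
abbrev OrthGroup (d : ℕ) : Type := unitary (E d →L[ℝ] E d)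

instance continuousStar_operators (d : ℕ) : ContinuousStar (E d →L[ℝ] E d) where
  continuous_star := (ContinuousLinearMap.adjoint (𝕜 := ℝ) (E := E d) (F := E d)).continuous

instance compactSpace_orthGroup (d : ℕ) : CompactSpace (OrthGroup d) := by
  have : ProperSpace (E d →L[ℝ] E d) := FiniteDimensional.proper ℝ _
  suffices IsCompact (unitary (E d →L[ℝ] E d) : Set (E d →L[ℝ] E d)) from
    isCompact_iff_compactSpace.1 this
  refine Metric.isCompact_of_isClosed_isBounded isClosed_unitary ?_
  refine (Metric.isBounded_closedBall (x := (0 : E d →L[ℝ] E d)) (r := 1)).subset fun u hu => ?_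
  rw [mem_closedBall_zero_iff]
  refine ContinuousLinearMap.opNorm_le_bound _ zero_le_one fun x => ?_
  rw [Unitary.norm_map ⟨u, hu⟩ x, one_mul]

/-- A measure on pairs of vectors of equal norm that is invariant under the diagonal action of the
orthogonal group is symmetric. With respect to the Haar measure of the orthogonal group, the
average of `f (g⁻¹ x, g⁻¹ y)` over `g` does not change when `x` and `y` are exchanged, because
a reflection exchanges them; and `f` has the same integral as its average. -/
lemma symmetric_of_invariant {d : ℕ} (M : Measure (E d × E d)) [SFinite M]
    (hinv : ∀ (g : E d ≃ₗᵢ[ℝ] E d) (f : E d × E d → ℝ≥0∞), Measurable f →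
      ∫⁻ p, f (g p.1, g p.2) ∂M = ∫⁻ p, f p ∂M)
    (hnorm : ∀ᵐ p ∂M, ‖p.1‖ = ‖p.2‖) (f : E d × E d → ℝ≥0∞) (hf : Measurable f) :
    ∫⁻ p, f p.swap ∂M = ∫⁻ p, f p ∂M := by
  have : ProperSpace (E d →L[ℝ] E d) := FiniteDimensional.proper ℝ _
  let _ : MeasurableSpace (OrthGroup d) := borel (OrthGroup d)
  have : BorelSpace (OrthGroup d) := ⟨rfl⟩
  let h : Measure (OrthGroup d) := Measure.haar
  have hact : Measurable fun q : (E d × E d) × OrthGroup d =>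
      ((((q.2⁻¹ : OrthGroup d) : E d →L[ℝ] E d) q.1.1,
        ((q.2⁻¹ : OrthGroup d) : E d →L[ℝ] E d) q.1.2) :
        E d × E d) := by
    apply Continuous.measurable
    have : Continuous fun q : (E d × E d) × OrthGroup d =>
        ((q.2⁻¹ : OrthGroup d) : E d →L[ℝ] E d) :=
      continuous_subtype_val.comp (continuous_inv.comp continuous_snd)
    exact (this.clm_apply continuous_fst.fst).prodMk (this.clm_apply continuous_fst.snd)
  -- `avg φ` is the integral of `φ` over the diagonal orbits
  let avg : (E d × E d → ℝ≥0∞) → E d × E d → ℝ≥0∞ := fun φ p =>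
    ∫⁻ g, φ (((g⁻¹ : OrthGroup d) : E d →L[ℝ] E d) p.1,
      ((g⁻¹ : OrthGroup d) : E d →L[ℝ] E d) p.2) ∂h
  have hM : ∀ φ : E d × E d → ℝ≥0∞, Measurable φ →
      ∫⁻ p, avg φ p ∂M = (∫⁻ p, φ p ∂M) * h Set.univ := by
    intro φ hφ
    rw [lintegral_lintegral_swap (f := fun p g => φ (((g⁻¹ : OrthGroup d) : E d →L[ℝ] E d) p.1,
      ((g⁻¹ : OrthGroup d) : E d →L[ℝ] E d) p.2)) (μ := M) (ν := h) (hφ.comp hact).aemeasurable]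
    rw [← lintegral_const]
    refine lintegral_congr fun g => ?_
    exact hinv (Unitary.linearIsometryEquiv g⁻¹) φ hφ
  have hswap : ∀ p : E d × E d, ‖p.1‖ = ‖p.2‖ → avg (fun q => f q.swap) p = avg f p := by
    rintro ⟨x, y⟩ hxy
    let r : E d ≃ₗᵢ[ℝ] E d := (ℝ ∙ (x - y))ᗮ.reflection
    have hrx : r x = y := Submodule.reflection_sub hxy
    have hry : r y = x := by rw [← hrx]; exact Submodule.reflection_reflection _ x
    let s : OrthGroup d := Unitary.linearIsometryEquiv.symm r
    have hs : ∀ z, (s : E d →L[ℝ] E d) z = r z := fun z => rfl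
    have := lintegral_mul_left_eq_self (μ := h) (fun g : OrthGroup d =>
      f (((g⁻¹ : OrthGroup d) : E d →L[ℝ] E d) x, ((g⁻¹ : OrthGroup d) : E d →L[ℝ] E d) y)) s⁻¹
    simp only [avg, Prod.swap]
    rw [← this]
    refine lintegral_congr fun g => ?_
    simp only [mul_inv_rev, inv_inv, Submonoid.coe_mul, mul_apply_eq_comp, hs,
      hrx, hry]
  have h0 : h Set.univ ≠ 0 := (Measure.measure_univ_pos.2 (NeZero.ne h)).ne'
  have hT : h Set.univ ≠ ⊤ := measure_ne_top _ _
  have key : (∫⁻ p, f p.swap ∂M) * h Set.univ = (∫⁻ p, f p ∂M) * h Set.univ := by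
    rw [← hM f hf, ← hM (fun q => f q.swap) (hf.comp measurable_swap)]
    exact lintegral_congr_ae (hnorm.mono hswap)
  exact (ENNReal.mul_left_inj h0 hT).1 key

/-! ### Invariance and finiteness of the measures on `S^{d-1}` and `S_x^{d-2}` -/

lemma measurableSet_subsph (d : ℕ) (x : E d) : MeasurableSet (subsph d x) := by
  refine IsClosed.measurableSet ?_
  refine Metric.isClosed_sphere.inter (isClosed_eq (f := fun v : E d => ⟪v, x⟫) ?_ ?_) <;> fun_prop

lemma setLIntegral_subsph_map {d : ℕ} (k : ℝ) (g : E d ≃ₗᵢ[ℝ] E d) (x : E d)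
    (f : E d → ℝ≥0∞) :
    ∫⁻ v in subsph d x, f (g v) ∂μH[k] = ∫⁻ v in subsph d (g x), f v ∂μH[k] := by
  have hpre : g ⁻¹' subsph d (g x) = subsph d x := by
    ext v; simp [subsph, sph]
  rw [← hpre]
  exact (g.toIsometryEquiv.measurePreserving_hausdorffMeasure k).setLIntegral_comp_preimage_emb
    g.toHomeomorph.measurableEmbedding f _

lemma lintegral_sphMeasure_map {d : ℕ} (g : E d ≃ₗᵢ[ℝ] E d) (f : E d → ℝ≥0∞) :
    ∫⁻ x, f (g x) ∂sphMeasure d = ∫⁻ x, f x ∂sphMeasure d := by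
  have hpre : g ⁻¹' sph d = sph d := by
    ext v; simp [sph]
  unfold sphMeasure
  conv_lhs => rw [← hpre]
  exact (g.toIsometryEquiv.measurePreserving_hausdorffMeasure _).setLIntegral_comp_preimage_emb
    g.toHomeomorph.measurableEmbedding f _

lemma isFiniteMeasure_sphMeasure {d : ℕ} (hd : 3 ≤ d) : IsFiniteMeasure (sphMeasure d) := by
  refine ⟨?_⟩
  have := hausdorffMeasure_sphere_lt_top (F := E d) (d - 1) (by simp; omega)
  rw [Nat.cast_sub (by omega), Nat.cast_one] at this
  simpa [sphMeasure, sph] using this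

lemma isFiniteMeasure_subsph {d : ℕ} (hd : 3 ≤ d) {e : E d} (he : e ∈ sph d) :
    IsFiniteMeasure ((μH[(d : ℝ) - 2] : Measure (E d)).restrict (subsph d e)) := by
  refine ⟨?_⟩
  have he1 : ‖e‖ = 1 := by simpa [sph] using he
  let W := (ℝ ∙ e)ᗮ
  have hW : Module.finrank ℝ W = (d - 2) + 1 := by
    have h1 := Submodule.finrank_add_finrank_orthogonal (ℝ ∙ e)
    rw [finrank_span_singleton (by rw [← norm_ne_zero_iff, he1]; norm_num),
      finrank_euclideanSpace_fin] at h1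
    change Module.finrank ℝ (ℝ ∙ e)ᗮ = _
    omega
  have := hausdorffMeasure_sphere_lt_top (F := W) (d - 2) hW
  rw [← (isometry_subtype_coe (s := (W : Set (E d)))).hausdorffMeasure_image
    (Or.inl (Nat.cast_nonneg _)), Nat.cast_sub (by omega), Nat.cast_ofNat] at this
  rw [Measure.restrict_apply_univ]
  convert this using 2
  ext v
  constructor
  · rintro ⟨hv, hve⟩
    refine ⟨⟨v, ?_⟩, ?_, rfl⟩
    · exact Submodule.mem_orthogonal_singleton_iff_inner_left.2 hve
    · simpa [sph] using hv
  · rintro ⟨w, hw, rfl⟩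
    refine ⟨?_, Submodule.mem_orthogonal_singleton_iff_inner_left.1 w.2⟩
    simpa [sph] using hw

/-! ### The joint measure of two consecutive positions -/

/-- The reflection exchanging `e` and `x` when these have equal norms; it is the identity for
`x = e`. -/
def polar {d : ℕ} (e x : E d) : E d ≃ₗᵢ[ℝ] E d := (ℝ ∙ (e - x))ᗮ.reflection

lemma polar_apply_pole {d : ℕ} {e x : E d} (he : e ∈ sph d) (hx : x ∈ sph d) :
    polar e x e = x := by
  simp only [sph, mem_sphere_zero_iff_norm] at he hx
  exact Submodule.reflection_sub (by rw [he, hx])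

lemma measurable_polar {d : ℕ} (e : E d) :
    Measurable fun p : E d × E d => polar e p.1 p.2 := by
  -- For `p.1 = e` the quotient is `0 / 0 = 0`, and both sides are `p.2`.
  have : (fun p : E d × E d => polar e p.1 p.2) = fun p =>
      -((2 * (⟪e - p.1, p.2⟫ / ‖e - p.1‖ ^ 2)) • (e - p.1) - p.2) := by
    ext1 p
    rw [polar, Submodule.reflection_orthogonal_apply, Submodule.reflection_singleton_apply]
    simp [mul_smul, two_smul]
  rw [this]
  fun_prop

lemma measurable_geo {d : ℕ} : Measurable fun q : E d × E d × ℝ => geo q.1 q.2.1 q.2.2 := by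
  unfold geo
  fun_prop

lemma map_geo {d : ℕ} (g : E d ≃ₗᵢ[ℝ] E d) (x v : E d) (θ : ℝ) :
    g (geo x v θ) = geo (g x) (g v) θ := by
  simp [geo]

lemma norm_geo {d : ℕ} {x v : E d} (hx : x ∈ sph d) (hv : v ∈ subsph d x) (θ : ℝ) :
    ‖geo x v θ‖ = 1 := by
  obtain ⟨hv, hvx⟩ := hv
  simp only [sph, mem_sphere_zero_iff_norm] at hx hv
  have h : ‖geo x v θ‖ ^ 2 = 1 := by
    rw [geo, norm_add_sq_real, norm_smul, norm_smul, hx, hv, inner_smul_left, inner_smul_right,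
      real_inner_comm, hvx]
    simp
  nlinarith [norm_nonneg (geo x v θ)]

/-- The parametrization `(x, v, θ) ↦ (x, γ_{(x, v')}(θ))` of the pairs (position, next position),
where the direction `v' ⟂ x` is the image of `v ⟂ e` under the reflection exchanging the
fixed pole `e` with `x`. -/
def pairMap {d : ℕ} (e : E d) (q : E d × E d × ℝ) : E d × E d :=
  (q.1, geo q.1 (polar e q.1 q.2.1) q.2.2)

lemma measurable_pairMap {d : ℕ} (e : E d) : Measurable (pairMap e) := by
  refine measurable_fst.prodMk (measurable_geo.comp (measurable_fst.prodMk
    (((measurable_polar e).comp (measurable_fst.prodMk measurable_snd.fst)).prodMk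
      measurable_snd.snd)))

/-- The joint law, without the normalization of `σ_{d-1}` and `μ_x`, of a starting point distributed
according to `σ_{d-1}` and of the point reached after one step of the walk. The choice of the
unit vector `e` does not matter. -/
def jointMeasure {d : ℕ} (e : E d) (τ : Measure ℝ) : Measure (E d × E d) :=
  ((sphMeasure d).prod (((μH[(d : ℝ) - 2] : Measure (E d)).restrict (subsph d e)).prod
    τ)).map (pairMap e)

lemma ae_mem_sph (d : ℕ) : ∀ᵐ x ∂sphMeasure d, x ∈ sph d :=
  ae_restrict_mem Metric.isClosed_sphere.measurableSet

/-- Integrals over `S_x^{d-2}` are integrals over the fixed subsphere `S_e^{d-2}` of an integrand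
that depends measurably on `x`. -/
lemma lintegral_pole {d : ℕ} (hd : 3 ≤ d) {e : E d} (he : e ∈ sph d) {x : E d} (hx : x ∈ sph d)
    (τ : Measure ℝ) [SFinite τ] (f : E d × E d → ℝ≥0∞) (hf : Measurable f) :
    ∫⁻ w, f (pairMap e (x, w))
        ∂(((μH[(d : ℝ) - 2] : Measure (E d)).restrict (subsph d e)).prod τ)
      = ∫⁻ v in subsph d x, ∫⁻ θ, f (x, geo x v θ) ∂τ ∂μH[(d : ℝ) - 2] := by
  have := isFiniteMeasure_subsph hd he
  have hm := hf.comp (measurable_pairMap e)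
  have hmx : Measurable fun w : E d × ℝ => f (pairMap e (x, w)) :=
    hm.comp (measurable_const.prodMk measurable_id)
  rw [lintegral_prod _ hmx.aemeasurable]
  conv_rhs => rw [← polar_apply_pole he hx, ← setLIntegral_subsph_map, polar_apply_pole he hx]
  rfl

lemma lintegral_jointMeasure {d : ℕ} (hd : 3 ≤ d) {e : E d} (he : e ∈ sph d)
    (τ : Measure ℝ) [SFinite τ] (f : E d × E d → ℝ≥0∞) (hf : Measurable f) :
    ∫⁻ p, f p ∂jointMeasure e τ = ∫⁻ x, ∫⁻ v in subsph d x, ∫⁻ θ, f (x, geo x v θ) ∂τ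
      ∂μH[(d : ℝ) - 2] ∂sphMeasure d := by
  have := isFiniteMeasure_subsph hd he
  have := isFiniteMeasure_sphMeasure hd
  rw [jointMeasure, lintegral_map hf (measurable_pairMap e),
    lintegral_prod (fun q => f (pairMap e q)) (hf.comp (measurable_pairMap e)).aemeasurable]
  refine lintegral_congr_ae ?_
  filter_upwards [ae_mem_sph d] with x hx
  exact lintegral_pole hd he hx τ f hf

lemma jointMeasure_invariant {d : ℕ} (hd : 3 ≤ d) {e : E d} (he : e ∈ sph d)
    (τ : Measure ℝ) [SFinite τ] (g : E d ≃ₗᵢ[ℝ] E d) (f : E d × E d → ℝ≥0∞) (hf : Measurable f) :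
    ∫⁻ p, f (g p.1, g p.2) ∂jointMeasure e τ = ∫⁻ p, f p ∂jointMeasure e τ := by
  have hfg : Measurable fun p : E d × E d => f (g p.1, g p.2) :=
    hf.comp ((g.continuous.measurable.comp measurable_fst).prodMk
      (g.continuous.measurable.comp measurable_snd))
  rw [lintegral_jointMeasure hd he τ _ hfg, lintegral_jointMeasure hd he τ f hf]
  conv_rhs => rw [← lintegral_sphMeasure_map g]
  refine lintegral_congr fun x => ?_
  conv_rhs => rw [← setLIntegral_subsph_map]
  simp only [map_geo]

lemma jointMeasure_norm {d : ℕ} (hd : 3 ≤ d) {e : E d} (he : e ∈ sph d)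
    (τ : Measure ℝ) [SFinite τ] : ∀ᵐ p ∂jointMeasure e τ, ‖p.1‖ = ‖p.2‖ := by
  have hS : MeasurableSet {p : E d × E d | ‖p.1‖ = ‖p.2‖} :=
    measurableSet_eq_fun (by fun_prop) (by fun_prop)
  rw [ae_iff]
  change jointMeasure e τ {p : E d × E d | ‖p.1‖ = ‖p.2‖}ᶜ = 0
  rw [← lintegral_indicator_one hS.compl,
    lintegral_jointMeasure hd he τ _ (measurable_one.indicator hS.compl)]
  rw [← lintegral_zero (μ := sphMeasure d)]
  refine lintegral_congr_ae ?_
  filter_upwards [ae_mem_sph d] with x hx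
  rw [← lintegral_zero (μ := (μH[(d : ℝ) - 2] : Measure (E d)).restrict (subsph d x))]
  refine setLIntegral_congr_fun (measurableSet_subsph d x) fun v hv => ?_
  have hx1 : ‖x‖ = 1 := by simpa [sph] using hx
  simp [hx1, norm_geo hx hv]

/-- One step of the walk started from `σ_{d-1}` restricted to `B` reaches `A` with the weight that
the joint measure gives to `B ×ˢ A`. -/
lemma lintegral_Ktau {d : ℕ} (hd : 3 ≤ d) {e : E d} (he : e ∈ sph d) (τ : Measure ℝ)
    [SFinite τ] {A B : Set (E d)} (hA : MeasurableSet A) (hB : MeasurableSet B) :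
    ∫⁻ x in B, Ktau d τ x A ∂sphMeasure d
      = (omegaSub d)⁻¹ * jointMeasure e (τ.restrict (Set.Ico 0 (2 * π))) (B ×ˢ A) := by
  have := isFiniteMeasure_subsph hd he
  have := isFiniteMeasure_sphMeasure hd
  set τ' := τ.restrict (Set.Ico 0 (2 * π))
  set ν := ((μH[(d : ℝ) - 2] : Measure (E d)).restrict (subsph d e)).prod τ'
  have hf : Measurable ((B ×ˢ A).indicator (1 : E d × E d → ℝ≥0∞)) :=
    measurable_one.indicator (hB.prod hA)
  have hmeas : Measurable fun x => ∫⁻ w, (B ×ˢ A).indicator (1 : E d × E d → ℝ≥0∞)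
      (pairMap e (x, w)) ∂ν :=
    (hf.comp (measurable_pairMap e)).lintegral_prod_right'
  rw [← lintegral_indicator_one (hB.prod hA), jointMeasure,
    lintegral_map hf (measurable_pairMap e),
    lintegral_prod (fun q => (B ×ˢ A).indicator (1 : E d × E d → ℝ≥0∞) (pairMap e q))
      (hf.comp (measurable_pairMap e)).aemeasurable,
    ← lintegral_const_mul _ hmeas, ← lintegral_indicator hB]
  refine lintegral_congr_ae ?_
  filter_upwards [ae_mem_sph d] with x hx
  rw [lintegral_pole hd he hx τ' _ hf]
  by_cases hxB : x ∈ B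
  · rw [Set.indicator_of_mem hxB, Ktau]
    congr 1
    refine lintegral_congr fun v => lintegral_congr fun θ => ?_
    by_cases hv : geo x v θ ∈ A <;> simp [hxB, hv]
  · simp [hxB]

/-- for a probability measure `τ` on `[0,2π)`, the geodesic random walk
kernel `K_τ` is reversible with respect to the volume measure `σ_{d-1}`. -/
theorem stmt5 {d : ℕ} (hd : 3 ≤ d) (τ : Measure ℝ) [IsProbabilityMeasure τ]
    (hτ : τ (Set.Ico 0 (2 * π)) = 1) :
    ∀ A B : Set (E d), MeasurableSet A → MeasurableSet B →
      ∫⁻ x in B, Ktau d τ x A ∂sphMeasure d = ∫⁻ x in A, Ktau d τ x B ∂sphMeasure d := by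
  intro A B hA hB
  obtain ⟨e, he⟩ : ∃ e : E d, e ∈ sph d :=
    ⟨EuclideanSpace.single ⟨0, by omega⟩ 1, by simp [sph]⟩
  have := isFiniteMeasure_subsph hd he
  have := isFiniteMeasure_sphMeasure hd
  have : SFinite (jointMeasure e (τ.restrict (Set.Ico 0 (2 * π)))) := by
    unfold jointMeasure; infer_instance
  rw [lintegral_Ktau hd he τ hA hB, lintegral_Ktau hd he τ hB hA]
  congr 1
  have hsymm := symmetric_of_invariant (jointMeasure e (τ.restrict (Set.Ico 0 (2 * π))))
    (jointMeasure_invariant hd he _) (jointMeasure_norm hd he _)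
    ((A ×ˢ B).indicator 1) (measurable_one.indicator (hA.prod hB))
  rw [← lintegral_indicator_one (hB.prod hA), ← lintegral_indicator_one (hA.prod hB), ← hsymm]
  refine lintegral_congr fun p => ?_
  rcases p with ⟨x, y⟩
  by_cases hx : x ∈ B <;> by_cases hy : y ∈ A <;> simp [hx, hy]

end
end

section
/- Let p : S^{d-1} → (0,∞) be measurable with Z := ∫_{S^{d-1}} p dσ_{d-1} ∈ (0,∞) and let π(dx) = (p(x)/Z) σ_{d-1}(dx). Suppose (P_t)_{t ∈ (0,‖p‖_∞)} is a family of Markov kernels on S^{d-1}, jointly measurable in (t,x), such that each P_t is reversible with respect to the normalized restriction of σ_{d-1} to L(t) = {x : p(x) > t}, i.e. ∫_{B∩L(t)} P_t(x,A) σ_{d-1}(dx) = ∫_{A∩L(t)} P_t(x,B) σ_{d-1}(dx) for all Borel A, B. Then the Markov kernel P(x,A) = (1/p(x)) ∫_0^{p(x)} P_t(x,A) dt is reversible with respect to π. -/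
/-!
With `σ = sphMeasure d`, the density `p` of `π` cancels the factor `1 / p(x)`, so both sides become
`Z⁻¹ ∫_B ∫_0^{p(x)} P_t(x, A) dt σ(dx)`. By Tonelli this is
`Z⁻¹ ∫_0^∞ (∫_{B ∩ L(t)} P_t(x, A) σ(dx)) dt` (`lintegral_layer_swap`), and the inner integral is
symmetric in `A` and `B` for every `t > 0`: by reversibility of `P_t` if `t < ‖p‖_∞`, and because
`L(t)` is `σ`-null otherwise.

Tonelli needs `σ` to be σ-finite. Rather than computing the Hausdorff measure of the sphere, this is
deduced from the positivity of `p` and the finiteness of `∫ p dσ` (`sigmaFinite_of_lintegral_lt_top`).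
-/

open MeasureTheory Real ProbabilityTheory
open scoped RealInnerProductSpace ENNReal NNReal

noncomputable section

/-- The target distribution `π(dx) = (p(x)/Z) σ_{d-1}(dx)`. -/
def piMeas (d : ℕ) (p : E d → ℝ) : Measure (E d) :=
  (∫⁻ x, ENNReal.ofReal (p x) ∂sphMeasure d)⁻¹ •
    (sphMeasure d).withDensity fun x => ENNReal.ofReal (p x)

/-- A measure that gives finite integral to an almost everywhere positive finite function is
σ-finite, since it has the density `f⁻¹` with respect to the finite measure `f • μ`. -/
lemma sigmaFinite_of_lintegral_lt_top {X : Type*} [MeasurableSpace X] {μ : Measure X}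
    {f : X → ℝ≥0∞} (hf : Measurable f) (h0 : ∀ᵐ x ∂μ, f x ≠ 0) (htop : ∀ x, f x ≠ ⊤)
    (hint : ∫⁻ x, f x ∂μ < ⊤) : SigmaFinite μ := by
  have : IsFiniteMeasure (μ.withDensity f) := isFiniteMeasure_withDensity hint.ne
  have h := withDensity_inv_same hf h0 (Filter.Eventually.of_forall htop)
  rw [← h]
  refine SigmaFinite.withDensity_of_ne_top ?_
  rw [ae_withDensity_iff hf]
  exact Filter.Eventually.of_forall fun x hx => ENNReal.inv_ne_top.2 hx

/-- Tonelli over the region `{(t, x) : x ∈ B, 0 < t < p x}`. -/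
lemma lintegral_layer_swap {X : Type*} [MeasurableSpace X] {μ : Measure X} [SFinite μ]
    {p : X → ℝ} (hp : Measurable p) {F : ℝ × X → ℝ≥0∞} (hF : Measurable F)
    {B : Set X} :
    ∫⁻ x in B, (∫⁻ t in Set.Ioo 0 (p x), F (t, x)) ∂μ =
      ∫⁻ t in Set.Ioi 0, (∫⁻ x in B ∩ {y | t < p y}, F (t, x) ∂μ) := by
  have hS : MeasurableSet {q : ℝ × X | q.1 < p q.2} :=
    measurableSet_lt measurable_fst (hp.comp measurable_snd)
  have hG := hF.indicator hS
  have hL : ∀ t, MeasurableSet {y | t < p y} := fun t => measurableSet_lt measurable_const hp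
  have h1 : ∀ x, ∫⁻ t in Set.Ioo 0 (p x), F (t, x) =
      ∫⁻ t in Set.Ioi 0, {q : ℝ × X | q.1 < p q.2}.indicator F (t, x) := by
    intro x
    rw [← Set.Iio_inter_Ioi, ← setLIntegral_indicator measurableSet_Iio]
    rfl
  have h2 : ∀ t, ∫⁻ x in B ∩ {y | t < p y}, F (t, x) ∂μ =
      ∫⁻ x in B, {q : ℝ × X | q.1 < p q.2}.indicator F (t, x) ∂μ := by
    intro t
    rw [Set.inter_comm, ← setLIntegral_indicator (hL t)]
    rfl
  simp_rw [h1, h2]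
  exact lintegral_lintegral_swap (hG.comp measurable_swap).aemeasurable

/-- The density of `π` cancels the factor `1 / p`. -/
lemma setLIntegral_piMeas {d : ℕ} {p : E d → ℝ} (hp : Measurable p)
    (h0 : ∀ᵐ x ∂sphMeasure d, ENNReal.ofReal (p x) ≠ 0) {g : E d → ℝ≥0∞}
    {B : Set (E d)} (hB : MeasurableSet B) :
    ∫⁻ x in B, (ENNReal.ofReal (p x))⁻¹ * g x ∂piMeas d p =
      (∫⁻ x, ENNReal.ofReal (p x) ∂sphMeasure d)⁻¹ * ∫⁻ x in B, g x ∂sphMeasure d := by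
  rw [piMeas, Measure.restrict_smul, lintegral_smul_measure, smul_eq_mul,
    restrict_withDensity hB,
    lintegral_withDensity_eq_lintegral_mul_non_measurable _ hp.ennreal_ofReal
      (Filter.Eventually.of_forall fun x => ENNReal.ofReal_lt_top)]
  congr 1
  refine lintegral_congr_ae ?_
  filter_upwards [ae_restrict_of_ae h0] with x hx
  rw [Pi.mul_apply, ← mul_assoc, ENNReal.mul_inv_cancel hx ENNReal.ofReal_ne_top, one_mul]

/-- if each Markov kernel `P_t` (for `t ∈ (0,‖p‖_∞)`, jointly measurable
in `(t,x)`) is reversible with respect to the (normalized) restriction of `σ_{d-1}` to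
`L(t) = {x : p(x) > t}`, then `P(x,A) = (1/p(x)) ∫_0^{p(x)} P_t(x,A) dt` is reversible
with respect to `π`. -/
theorem stmt13 {d : ℕ} (hd : 3 ≤ d) (p : E d → ℝ) (hp : Measurable p)
    (hpos : ∀ y ∈ sph d, 0 < p y)
    (hZ0 : 0 < ∫⁻ x, ENNReal.ofReal (p x) ∂sphMeasure d)
    (hZtop : ∫⁻ x, ENNReal.ofReal (p x) ∂sphMeasure d < ⊤)
    (P : ℝ → Kernel (E d) (E d)) [∀ t, IsMarkovKernel (P t)]
    (hmeas : ∀ A : Set (E d), MeasurableSet A →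
      Measurable fun q : ℝ × E d => (P q.1) q.2 A)
    (hrev : ∀ t : ℝ, 0 < t →
      ENNReal.ofReal t < essSup (fun x => ENNReal.ofReal (p x)) (sphMeasure d) →
      ∀ A B : Set (E d), MeasurableSet A → MeasurableSet B →
        ∫⁻ x in B ∩ {y | t < p y}, (P t) x A ∂sphMeasure d =
          ∫⁻ x in A ∩ {y | t < p y}, (P t) x B ∂sphMeasure d) :
    ∀ A B : Set (E d), MeasurableSet A → MeasurableSet B →
      ∫⁻ x in B, (ENNReal.ofReal (p x))⁻¹ *
          (∫⁻ t in Set.Ioo 0 (p x), (P t) x A ∂volume) ∂piMeas d p =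
        ∫⁻ x in A, (ENNReal.ofReal (p x))⁻¹ *
          (∫⁻ t in Set.Ioo 0 (p x), (P t) x B ∂volume) ∂piMeas d p := by
  intro A B hA hB
  have h0 : ∀ᵐ x ∂sphMeasure d, ENNReal.ofReal (p x) ≠ 0 := by
    have hs : ∀ᵐ x ∂sphMeasure d, x ∈ sph d := ae_restrict_mem Metric.isClosed_sphere.measurableSet
    filter_upwards [hs] with x hx
    exact (ENNReal.ofReal_pos.2 (hpos x hx)).ne'
  have : SigmaFinite (sphMeasure d) :=
    sigmaFinite_of_lintegral_lt_top hp.ennreal_ofReal h0 (fun _ => ENNReal.ofReal_ne_top) hZtop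
  rw [setLIntegral_piMeas hp h0 hB, setLIntegral_piMeas hp h0 hA,
    lintegral_layer_swap hp (hmeas A hA), lintegral_layer_swap hp (hmeas B hB)]
  congr 1
  refine setLIntegral_congr_fun measurableSet_Ioi fun t (ht : 0 < t) => ?_
  by_cases hlt : ENNReal.ofReal t < essSup (fun x => ENNReal.ofReal (p x)) (sphMeasure d)
  · exact hrev t ht hlt A B hA hB
  · have hnull : sphMeasure d {y | t < p y} = 0 := by
      have hae : ∀ᵐ x ∂sphMeasure d, ¬ t < p x := by
        filter_upwards [ENNReal.ae_le_essSup fun x => ENNReal.ofReal (p x)] with x hx hxt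
        exact absurd ((ENNReal.ofReal_lt_ofReal_iff (ht.trans hxt)).2 hxt)
          (not_lt.2 (hx.trans (not_lt.1 hlt)))
      simpa [ae_iff] using hae
    have hz : ∀ (C : Set (E d)) (g : E d → ℝ≥0∞),
        ∫⁻ x in C ∩ {y | t < p y}, g x ∂sphMeasure d = 0 := fun C g =>
      setLIntegral_measure_zero _ _ (measure_mono_null Set.inter_subset_right hnull)
    exact (hz _ _).trans (hz _ _).symm

end
end
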